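/- Fix K ≥ 2, n > 0, a class index k, and fixed positive distances d_j > 0 for all j ≠ k. Consider the harmonic probability p_k(t) = t^{-n} / (t^{-n} + Σ_{j ≠ k} d_j^{-n}) as a function of the distance t > 0 to the correct prototype. Then p_k(t) → 1 and −log p_k(t) → 0 as t → 0+; that is, the per-sample harmonic loss converges to 0 as the representation approaches the correct class prototype (a finite convergence point). -/

import Mathlib

open Finset Filter

open Asymptotics Topology

theorem tendsto_div_add_of_isLittleO {α 𝕜 : Type*} [NormedField 𝕜] {l : Filter α} {u v : α → 𝕜}
    (hu : ∀ᶠ x in l, u x ≠ 0) (hvu : v =o[l] u) :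
    Tendsto (fun x => u x / (u x + v x)) l (𝓝 1) := by
  have h_equiv : u + v ~[l] u := IsEquivalent.refl.add_isLittleO hvu
  have h_ratio : Tendsto ((u + v) / u) l (𝓝 1) := (isEquivalent_iff_tendsto_one hu).1 h_equiv
  simpa only [Pi.div_apply, Pi.add_apply, inv_div, inv_one] using h_ratio.inv₀ one_ne_zero

theorem isLittleO_const_rpow_nhdsGT_zero {E : Type*} [NormedAddCommGroup E] {r : ℝ}
    (hr : r < 0) (c : E) : (fun _ : ℝ => c) =o[𝓝[>] 0] fun t : ℝ => t ^ r :=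
  isLittleO_const_left.2 <| .inr <|
    tendsto_norm_atTop_atTop.comp (tendsto_rpow_neg_nhdsGT_zero hr)

/-- **Finite convergence point of the per-sample harmonic loss.**
Fix `K ≥ 2`, `n > 0`, a class index `k`, and fixed positive distances
`dist j > 0` for `j ≠ k`. As the distance `t > 0` to the correct prototype
tends to `0` from the right, the harmonic probability
`p_k(t) = t^(-n) / (t^(-n) + ∑_{j ≠ k} dist j ^(-n))` tends to `1` and the
per-sample harmonic loss `-log p_k(t)` tends to `0`. -/
theorem harmonic_loss_finite_convergence_point
    (K : ℕ) (hK : 2 ≤ K) (n : ℝ) (hn : 0 < n) (k : Fin K)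
    (dist : Fin K → ℝ) (hd : ∀ j, j ≠ k → 0 < dist j) :
    Tendsto
      (fun t : ℝ => t ^ (-n) /
        (t ^ (-n) + ∑ j ∈ Finset.univ.erase k, dist j ^ (-n)))
      (nhdsWithin 0 (Set.Ioi 0)) (nhds 1) ∧
    Tendsto
      (fun t : ℝ => -Real.log (t ^ (-n) /
        (t ^ (-n) + ∑ j ∈ Finset.univ.erase k, dist j ^ (-n))))
      (nhdsWithin 0 (Set.Ioi 0)) (nhds 0) := by
  have h_ne : ∀ᶠ t : ℝ in 𝓝[>] 0, t ^ (-n) ≠ 0 :=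
    eventually_mem_nhdsWithin.mono fun _ ht => (Real.rpow_pos_of_pos ht _).ne'
  have h_prob := tendsto_div_add_of_isLittleO h_ne
    (isLittleO_const_rpow_nhdsGT_zero (neg_lt_zero.2 hn)
      (∑ j ∈ Finset.univ.erase k, dist j ^ (-n)))
  refine ⟨h_prob, ?_⟩
  simpa only [Real.log_one, neg_zero] using (h_prob.log one_ne_zero).neg
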